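/- For every n ≥ 4, the distinguishing number of the n-dimensional augmented cube satisfies D(AQ_n) = 2. -/

import Mathlib

/-- The `n`-dimensional augmented cube: vertices are `{0,1}^n`; distinct vertices `a`, `b`
are adjacent iff either (1) they differ in exactly one coordinate `l`, or (2) there is an
`l` such that they agree on all coordinates before `l` and differ on all coordinates from
`l` on. -/
def AQ (n : ℕ) : SimpleGraph (Fin n → Bool) where
  Adj a b := (∃ l, a l ≠ b l ∧ ∀ i, i ≠ l → a i = b i) ∨
             (∃ l, (∀ i, i < l → a i = b i) ∧ ∀ i, l ≤ i → a i ≠ b i)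
  symm := by
    constructor
    rintro a b (⟨l, h1, h2⟩ | ⟨l, h1, h2⟩)
    · exact Or.inl ⟨l, h1.symm, fun i hi => (h2 i hi).symm⟩
    · exact Or.inr ⟨l, fun i hi => (h1 i hi).symm, fun i hi => (h2 i hi).symm⟩
  loopless := by
    constructor
    rintro a (⟨l, h1, _⟩ | ⟨l, _, h2⟩)
    · exact h1 rfl
    · exact h2 l le_rfl rfl

/-- A permutation of the vertices is an automorphism of `G` iff it preserves adjacency. -/
def IsAuto {V : Type*} (G : SimpleGraph V) (π : Equiv.Perm V) : Prop :=
  ∀ v w, G.Adj (π v) (π w) ↔ G.Adj v w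

/-- A coloring `c : V → Fin r` is distinguishing if no nontrivial automorphism preserves it. -/
def IsDistinguishing {V : Type*} (G : SimpleGraph V) {r : ℕ} (c : V → Fin r) : Prop :=
  ∀ π : Equiv.Perm V, IsAuto G π → (∀ v, c (π v) = c v) → π = 1

/-- The distinguishing number `D(G)`: the least `r` admitting a distinguishing `r`-coloring. -/
noncomputable def distNum {V : Type*} (G : SimpleGraph V) : ℕ :=
  sInf {r : ℕ | ∃ c : V → Fin r, IsDistinguishing G c}

/-!
Prefix sums over `ZMod 2` turn `AQ n` into the Cayley graph on `(ZMod 2) ^ n` whose generators are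
the vertices `δ i` and the edges `δ i + δ (i + 1)` of a path with `n` vertices. Around `0` the graph
is this path with a triangle erected on each edge, so an automorphism fixing `0` and both ends of
one edge fixes every interior vertex of the path, and can at most exchange `δ 0` with `δ 0 + δ 1`
and `δ last` with `δ last + δ (last - 1)`. If it fixes both ends of the path too, then, for `n ≥ 4`,
it also fixes `δ 0 + δ last`; translating the argument to the neighbours of `0` shows that it is the
identity. The set `{0, δ 0, δ 1, δ last}` induces a paw, and an automorphism preserving it fixes all
four vertices, because `δ 0` is a leaf of the path and `δ 1` is not. Hence its indicator is a
distinguishing colouring.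
-/

open SimpleGraph

section Distinguishing

variable {V W : Type*} {G : SimpleGraph V} {H : SimpleGraph W} {r : ℕ}

lemma IsDistinguishing.comp_iso {c : W → Fin r} (hc : IsDistinguishing H c) (e : G ≃g H) :
    IsDistinguishing G (c ∘ e) := by
  intro π hπ hcπ
  have hπ' : e.toEquiv.permCongr π = 1 := by
    refine hc _ (fun v w ↦ ?_) fun v ↦ ?_
    · change H.Adj (e (π (e.symm v))) (e (π (e.symm w))) ↔ H.Adj v w
      rw [e.map_adj_iff, hπ, e.symm.map_adj_iff]
    · change c (e (π (e.symm v))) = c v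
      simpa using hcπ (e.symm v)
  exact e.toEquiv.permCongr.injective (hπ'.trans (Equiv.permCongr_refl _).symm)

lemma IsDistinguishing.two_le {c : V → Fin r} (hc : IsDistinguishing G c) {π : Equiv.Perm V}
    (hπ : IsAuto G π) (hne : π ≠ 1) : 2 ≤ r := by
  by_contra! hr
  have : Subsingleton (Fin r) := Fin.subsingleton_iff_le_one.2 (by omega)
  exact hne (hc π hπ fun _ ↦ Subsingleton.elim _ _)

lemma IsDistinguishing.distNum_eq_two {c : V → Fin 2} (hc : IsDistinguishing G c)
    {π : Equiv.Perm V} (hπ : IsAuto G π) (hne : π ≠ 1) : distNum G = 2 :=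
  le_antisymm (Nat.sInf_le ⟨c, hc⟩)
    (le_csInf ⟨2, c, hc⟩ fun _ ⟨_, hc'⟩ ↦ hc'.two_le hπ hne)

lemma exists_isDistinguishing_of_set (C : Set V)
    (hC : ∀ f : G ≃g G, (∀ v, f v ∈ C ↔ v ∈ C) → ∀ v, f v = v) :
    ∃ c : V → Fin 2, IsDistinguishing G c := by
  classical
  refine ⟨fun v ↦ if v ∈ C then 1 else 0, fun π hπ hc ↦ Equiv.ext (hC ⟨π, hπ _ _⟩ fun v ↦ ?_)⟩
  have hv := hc v
  by_cases h₁ : π v ∈ C <;> by_cases h₂ : v ∈ C <;> simp_all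

end Distinguishing

section Graph

variable {V : Type*} {G : SimpleGraph V}

lemma not_adj_of_cliqueFree_three (hG : G.CliqueFree 3) ⦃i j k : V⦄ (hij : G.Adj i j)
    (hjk : G.Adj j k) : ¬ G.Adj i k := by
  classical
  exact fun hik ↦ hG {i, j, k} (is3Clique_triple_iff.2 ⟨hij, hik, hjk⟩)

/-- Walking away from the edge `ij`, each vertex reached satisfies `P` together with one of its
neighbours, except for dead ends, which never carry the walk further. -/
lemma propagates_from_edge_of_preconnected {P : V → Prop} (hG : G.Preconnected)
    (step : ∀ ⦃i j k l⦄, G.Adj i j → G.Adj j k → G.Adj k l → i ≠ k → l ≠ j → P i → P j → P k)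
    {i j : V} (hij : G.Adj i j) (hi : P i) (hj : P j) {k a b : V} (ha : G.Adj k a)
    (hb : G.Adj k b) (hab : a ≠ b) : P k := by
  let Good (v : V) : Prop := P v ∧ ∃ w, G.Adj w v ∧ P w
  let DeadEnd (v : V) : Prop := ∃ w, Good w ∧ ∀ u, G.Adj v u → u = w
  have reached (v : V) : Good v ∨ DeadEnd v := by
    induction (reachable_iff_reflTransGen i v).1 (hG i v) with
    | refl => exact Or.inl ⟨hi, j, hij.symm, hj⟩
    | @tail v x _ hvx ih =>
      obtain hv | ⟨w, hw, hvw⟩ := ih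
      · obtain ⟨hPv, w, hwv, hPw⟩ := id hv
        by_cases hxw : x = w
        · exact Or.inl (hxw ▸ ⟨hPw, v, hwv.symm, hPv⟩)
        · by_cases hx : ∀ u, G.Adj x u → u = v
          · exact Or.inr ⟨v, hv, hx⟩
          · push Not at hx
            obtain ⟨l, hxl, hlv⟩ := hx
            exact Or.inl ⟨step hwv hvx hxl (Ne.symm hxw) hlv hPw hPv, v, hvx, hPv⟩
      · exact Or.inl (hvw x hvx ▸ hw)
  obtain hk | ⟨w, -, hw⟩ := reached k
  · exact hk.1
  · exact absurd ((hw a ha).trans (hw b hb).symm) hab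

/-- In the paw `{z, a, b, c}` the vertex `z` has degree three and `c` has degree one. -/
lemma apply_paw (f : G ≃g G) {z a b c : V}
    (hf : ∀ x, f x ∈ ({z, a, b, c} : Set V) ↔ x ∈ ({z, a, b, c} : Set V))
    (hza : G.Adj z a) (hzb : G.Adj z b) (hzc : G.Adj z c) (hab : G.Adj a b)
    (hac : ¬ G.Adj a c) (hbc : ¬ G.Adj b c) :
    f z = z ∧ f c = c ∧ (f a = a ∧ f b = b ∨ f a = b ∧ f b = a) := by
  simp only [Set.mem_insert_iff, Set.mem_singleton_iff] at hf
  have adj (x y) : G.Adj (f x) (f y) ↔ G.Adj x y := f.map_adj_iff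
  have inj (x y) : f x = f y ↔ x = y := f.injective.eq_iff
  have hfz : f z = z := by
    have := (hf z).2 (by simp)
    have := (adj z a).2 hza
    have := (adj z b).2 hzb
    have := (adj z c).2 hzc
    grind [SimpleGraph.Adj.symm, SimpleGraph.Adj.ne]
  have hfc : f c = c := by
    have := (hf c).2 (by simp)
    have := (adj c a).not.2 fun h ↦ hac h.symm
    have := (adj c b).not.2 fun h ↦ hbc h.symm
    grind [SimpleGraph.Adj.symm, SimpleGraph.Adj.ne]
  have := (hf a).2 (by simp)
  have := (hf b).2 (by simp)
  grind [SimpleGraph.Adj.symm, SimpleGraph.Adj.ne]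

end Graph

section Cayley

variable {M : Type*} [AddGroup M] {s : Set M}

/-- Left translation by `v`, an automorphism of every Cayley graph on `M`. -/
def leftTranslation (s : Set M) (v : M) : addCayley s ≃g addCayley s where
  toEquiv := Equiv.addLeft v
  map_rel_iff' := addCayley_adj_add_iff_right

/-- The automorphism `x ↦ -f v + f (v + x)`: the action of `f` around `v`, with both `v` and
`f v` moved to the origin. -/
def differential (f : addCayley s ≃g addCayley s) (v : M) : addCayley s ≃g addCayley s :=
  (leftTranslation s v).trans (f.trans (leftTranslation s (-f v)))

variable {f : addCayley s ≃g addCayley s} {v x y : M}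

lemma differential_apply : differential f v x = -f v + f (v + x) := rfl

lemma differential_zero : differential f v 0 = 0 := by
  simp [differential_apply]

lemma differential_apply_eq_iff (hv : f v = v) :
    differential f v x = y ↔ f (v + x) = v + y := by
  rw [differential_apply, hv, neg_add_eq_iff_eq_add]

lemma apply_eq_self_of_closure_eq_top (hs : AddSubmonoid.closure s = ⊤)
    (rigid : ∀ g : addCayley s ≃g addCayley s, g 0 = 0 → (∀ x ∈ s, g x = x) →
      ∀ u ∈ s, ∀ x ∈ s, g (u + x) = u + x)
    (hf0 : f 0 = 0) (hfs : ∀ x ∈ s, f x = x) (v : M) : f v = v := by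
  suffices f v = v ∧ ∀ x ∈ s, f (v + x) = v + x from this.1
  have hv : v ∈ AddSubmonoid.closure s := hs ▸ AddSubmonoid.mem_top v
  induction hv using AddSubmonoid.closure_induction_right with
  | zero => simpa [hf0] using hfs
  | add_right v _ u hu ih =>
    obtain ⟨hv, hvs⟩ := ih
    refine ⟨hvs u hu, fun x hx ↦ ?_⟩
    have hg := rigid (differential f v) differential_zero
      (fun x hx ↦ (differential_apply_eq_iff hv).2 (hvs x hx)) u hu x hx
    rw [add_assoc, (differential_apply_eq_iff hv).1 hg]

end Cayley

local notation "δ" i:max => (Pi.single i 1 : _ → ZMod 2)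

section Single

variable {ι : Type*} [DecidableEq ι] {T : SimpleGraph ι} {i j k l p q : ι}

lemma single_one_injective : Function.Injective fun i : ι ↦ δ i := fun i j h ↦ by
  simpa [Pi.single_apply] using congrFun h i

lemma single_ne_single_add_single (hjk : j ≠ k) : (δ i : ι → ZMod 2) ≠ δ j + δ k := by
  intro h
  have hj := congrFun h j
  have hk := congrFun h k
  simp only [Pi.add_apply, Pi.single_apply] at hj hk
  grind

lemma single_add_single_eq_iff (hij : i ≠ j) :
    (δ i : ι → ZMod 2) + δ j = δ k + δ l ↔ (i = k ∧ j = l) ∨ (i = l ∧ j = k) := by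
  refine ⟨fun h ↦ ?_, by rintro (⟨rfl, rfl⟩ | ⟨rfl, rfl⟩) <;> simp [add_comm]⟩
  have hi := congrFun h i
  have hj := congrFun h j
  simp only [Pi.add_apply, Pi.single_apply] at hi hj
  grind

lemma single_add_ne_single_add_single (hjk : j ≠ k) (hpq : p ≠ q) :
    (δ i : ι → ZMod 2) + (δ j + δ k) ≠ δ p + δ q := by
  intro h
  have hi := congrFun h i
  have hj := congrFun h j
  have hk := congrFun h k
  have hp := congrFun h p
  have hq := congrFun h q
  simp only [Pi.add_apply, Pi.single_apply] at hi hj hk hp hq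
  grind

/-- Three edges whose characteristic vectors sum to zero over `ZMod 2` form a triangle. -/
lemma edge_add_edge_ne_edge (hT : T.CliqueFree 3) (hij : T.Adj i j) (hkl : T.Adj k l)
    (hpq : T.Adj p q) : (δ i + δ j : ι → ZMod 2) + (δ k + δ l) ≠ δ p + δ q := by
  have hT := not_adj_of_cliqueFree_three hT
  intro h
  have hi := congrFun h i
  have hj := congrFun h j
  have hk := congrFun h k
  have hl := congrFun h l
  have hp := congrFun h p
  have hq := congrFun h q
  simp only [Pi.add_apply, Pi.single_apply] at hi hj hk hl hp hq
  grind [SimpleGraph.Adj.symm, SimpleGraph.Adj.ne]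

end Single

section EdgeGenerators

variable {ι : Type*} [DecidableEq ι]

/-- The vectors `δ i` and `δ i + δ j` for `i` adjacent to `j`: the characteristic vectors of the
vertices and of the edges of `T`. -/
def edgeGenerators (T : SimpleGraph ι) : Set (ι → ZMod 2) :=
  {x | (∃ i, x = δ i) ∨ ∃ i j, T.Adj i j ∧ x = δ i + δ j}

/-- The Cayley graph of `(ZMod 2)^ι` generated by the vertices and edges of a graph `T` on `ι`.
When `T` is a path it is an augmented cube. -/
abbrev edgeCube (T : SimpleGraph ι) : SimpleGraph (ι → ZMod 2) :=
  addCayley (edgeGenerators T)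

variable {T : SimpleGraph ι} {i j k : ι} {x y : ι → ZMod 2}

lemma single_mem_edgeGenerators : δ i ∈ edgeGenerators T := Or.inl ⟨i, rfl⟩

lemma single_add_single_mem_edgeGenerators_iff (hij : i ≠ j) :
    δ i + δ j ∈ edgeGenerators T ↔ T.Adj i j := by
  refine ⟨?_, fun h ↦ Or.inr ⟨i, j, h, rfl⟩⟩
  rintro (⟨k, hk⟩ | ⟨k, l, hkl, h⟩)
  · exact absurd hk.symm (single_ne_single_add_single hij)
  · obtain ⟨rfl, rfl⟩ | ⟨rfl, rfl⟩ := (single_add_single_eq_iff hij).1 h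
    exacts [hkl, hkl.symm]

lemma zero_notMem_edgeGenerators : 0 ∉ edgeGenerators T := by
  rintro (⟨i, hi⟩ | ⟨i, j, hij, h⟩)
  · simpa using congrFun hi i
  · simpa [Pi.single_apply, hij.ne] using congrFun h i

lemma adj_of_single_add_single_mem (h : δ i + δ j ∈ edgeGenerators T) : T.Adj i j := by
  obtain rfl | hij := eq_or_ne i j
  · exact absurd h (by simpa [ZModModule.add_self] using zero_notMem_edgeGenerators)
  · exact (single_add_single_mem_edgeGenerators_iff hij).1 h

lemma edgeCube_adj : (edgeCube T).Adj x y ↔ x + y ∈ edgeGenerators T := by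
  rw [addCayley_adj, ZModModule.neg_eq_self, ZModModule.neg_eq_self, add_comm y x, or_self,
    and_iff_right_iff_imp]
  rintro h rfl
  exact zero_notMem_edgeGenerators (ZModModule.add_self x ▸ h)

lemma eq_or_eq_of_single_add_edge_mem (hjk : j ≠ k)
    (h : δ i + (δ j + δ k) ∈ edgeGenerators T) : i = j ∨ i = k := by
  obtain ⟨l, hl⟩ | ⟨p, q, hpq, h⟩ := h
  · have hjk' : δ j + δ k = δ i + δ l := by
      rw [← hl, ← add_assoc (δ i), ZModModule.add_self, zero_add]
    obtain ⟨rfl, -⟩ | ⟨-, rfl⟩ := (single_add_single_eq_iff hjk).1 hjk'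
    exacts [Or.inl rfl, Or.inr rfl]
  · exact absurd h (single_add_ne_single_add_single hjk hpq.ne)

lemma edge_add_edge_notMem {l : ι} (hT : T.CliqueFree 3) (hij : T.Adj i j) (hkl : T.Adj k l) :
    δ i + δ j + (δ k + δ l) ∉ edgeGenerators T := by
  rintro (⟨p, hp⟩ | ⟨p, q, hpq, h⟩)
  · refine single_add_ne_single_add_single hkl.ne hij.ne (i := p) ?_
    rw [← hp, add_assoc, ZModModule.add_self, add_zero]
  · exact edge_add_edge_ne_edge hT hij hkl hpq h

lemma exists_of_add_single_mem (hx : x ∈ edgeGenerators T) (h : x + δ j ∈ edgeGenerators T) :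
    ∃ k, T.Adj j k ∧ (x = δ k ∨ x = δ j + δ k) := by
  obtain ⟨i, rfl⟩ | ⟨i, k, hik, rfl⟩ := hx
  · exact ⟨i, (adj_of_single_add_single_mem h).symm, Or.inl rfl⟩
  · rw [add_comm] at h
    obtain rfl | rfl := eq_or_eq_of_single_add_edge_mem hik.ne h
    · exact ⟨k, hik, Or.inr rfl⟩
    · exact ⟨i, hik.symm, Or.inr (add_comm _ _)⟩

lemma eq_or_eq_of_add_edge_mem (hT : T.CliqueFree 3) (hij : T.Adj i j)
    (hx : x ∈ edgeGenerators T) (h : x + (δ i + δ j) ∈ edgeGenerators T) : x = δ i ∨ x = δ j := by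
  obtain ⟨k, rfl⟩ | ⟨k, l, hkl, rfl⟩ := hx
  · exact (eq_or_eq_of_single_add_edge_mem hij.ne h).imp (by rintro rfl; rfl) (by rintro rfl; rfl)
  · exact absurd h (edge_add_edge_notMem hT hkl hij)

lemma eq_edge_of_add_single_mem (hT : T.CliqueFree 3) (hij : T.Adj i j)
    (hx : x ∈ edgeGenerators T) (hi : x + δ i ∈ edgeGenerators T)
    (hj : x + δ j ∈ edgeGenerators T) : x = δ i + δ j := by
  obtain ⟨k, hik, rfl | rfl⟩ := exists_of_add_single_mem hx hi
  · exact absurd (adj_of_single_add_single_mem hj).symm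
      (not_adj_of_cliqueFree_three hT hij.symm hik)
  · rw [add_comm] at hj
    obtain rfl | rfl := eq_or_eq_of_single_add_edge_mem hik.ne hj
    · exact absurd rfl hij.ne
    · rfl

end EdgeGenerators

section EdgeCube

variable {ι : Type*} [DecidableEq ι] {T : SimpleGraph ι} {i j k l p q : ι} {x y : ι → ZMod 2}
  {f : edgeCube T ≃g edgeCube T}

lemma apply_add_apply_mem_iff :
    f x + f y ∈ edgeGenerators T ↔ x + y ∈ edgeGenerators T := by
  simp only [← edgeCube_adj, f.map_adj_iff]

lemma apply_mem_edgeGenerators_iff (hf0 : f 0 = 0) :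
    f x ∈ edgeGenerators T ↔ x ∈ edgeGenerators T := by
  simpa [hf0] using apply_add_apply_mem_iff (f := f) (x := x) (y := 0)

lemma apply_single_add_single_eq (hT : T.CliqueFree 3) (hf0 : f 0 = 0) (hij : T.Adj i j)
    (hpq : T.Adj p q) (hi : f (δ i) = δ p) (hj : f (δ j) = δ q) :
    f (δ i + δ j) = δ p + δ q := by
  refine eq_edge_of_add_single_mem hT hpq ((apply_mem_edgeGenerators_iff hf0).2 ?_) ?_ ?_
  · exact (single_add_single_mem_edgeGenerators_iff hij.ne).2 hij
  · rw [← hi, apply_add_apply_mem_iff, add_right_comm, ZModModule.add_self, zero_add]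
    exact single_mem_edgeGenerators
  · rw [← hj, apply_add_apply_mem_iff, add_assoc, ZModModule.add_self, add_zero]
    exact single_mem_edgeGenerators

/-- The common neighbours of `0` and `δ j` are `δ i`, `δ i + δ j`, `δ k` and `δ j + δ k`, and `f`
fixes the first two. -/
lemma apply_single_eq_or (hT : T.CliqueFree 3) (hf0 : f 0 = 0) (hij : T.Adj i j)
    (hjk : T.Adj j k) (hik : i ≠ k) (hj : ∀ l, T.Adj j l → l = i ∨ l = k)
    (hfi : f (δ i) = δ i) (hfj : f (δ j) = δ j) :
    f (δ k) = δ k ∨ f (δ k) = δ j + δ k := by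
  have hmem : f (δ k) ∈ edgeGenerators T :=
    (apply_mem_edgeGenerators_iff hf0).2 single_mem_edgeGenerators
  have hmem' : f (δ k) + δ j ∈ edgeGenerators T := by
    rw [← hfj, apply_add_apply_mem_iff]
    exact (single_add_single_mem_edgeGenerators_iff hjk.ne').2 hjk.symm
  obtain ⟨l, hjl, h⟩ := exists_of_add_single_mem hmem hmem'
  obtain rfl | rfl := hj l hjl
  · obtain h | h := h
    · exact absurd (single_one_injective (f.injective (h.trans hfi.symm))) hik.symm
    · have hfji := apply_single_add_single_eq hT hf0 hij.symm hij.symm hfj hfi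
      exact absurd (f.injective (h.trans hfji.symm)) (single_ne_single_add_single hij.ne')
  · exact h

lemma apply_single_eq_self (hT : T.CliqueFree 3) (hf0 : f 0 = 0) (hij : T.Adj i j)
    (hjk : T.Adj j k) (hkl : T.Adj k l) (hik : i ≠ k) (hlj : l ≠ j)
    (hj : ∀ l, T.Adj j l → l = i ∨ l = k) (hfi : f (δ i) = δ i) (hfj : f (δ j) = δ j) :
    f (δ k) = δ k := by
  refine (apply_single_eq_or hT hf0 hij hjk hik hj hfi hfj).resolve_right fun hfk ↦ ?_
  have hmem : f (δ l) ∈ edgeGenerators T :=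
    (apply_mem_edgeGenerators_iff hf0).2 single_mem_edgeGenerators
  have hmem' : f (δ l) + (δ j + δ k) ∈ edgeGenerators T := by
    rw [← hfk, apply_add_apply_mem_iff]
    exact (single_add_single_mem_edgeGenerators_iff hkl.ne').2 hkl.symm
  obtain h | h := eq_or_eq_of_add_edge_mem hT hjk hmem hmem'
  · exact hlj (single_one_injective (f.injective (h.trans hfj.symm)))
  · have hlj' : T.Adj l j := by
      refine adj_of_single_add_single_mem (apply_add_apply_mem_iff (f := f).1 ?_)
      rw [h, hfj]
      exact (single_add_single_mem_edgeGenerators_iff hjk.ne').2 hjk.symm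
    exact not_adj_of_cliqueFree_three hT hjk hkl hlj'.symm

lemma apply_single_add_single_eq_self (hT : T.CliqueFree 3) (hij : T.Adj i j) (hjk : T.Adj j k)
    (hik : i ≠ k) (hj : ∀ l, T.Adj j l → l = i ∨ l = k) (hpj : ¬ T.Adj p j)
    (hfp : f (δ p) = δ p) (hfk : f (δ k) = δ k) (hfpi : f (δ p + δ i) = δ p + δ i)
    (hfpj : f (δ p + δ j) = δ p + δ j) : f (δ p + δ k) = δ p + δ k := by
  have h := apply_single_eq_or (f := differential f (δ p)) hT differential_zero hij hjk hik hj
    ((differential_apply_eq_iff hfp).2 hfpi) ((differential_apply_eq_iff hfp).2 hfpj)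
  simp only [differential_apply_eq_iff hfp] at h
  refine h.resolve_right fun h ↦ hpj ?_
  have hmem : f (δ p + δ k) + f (δ k) ∈ edgeGenerators T := by
    rw [apply_add_apply_mem_iff, add_assoc, ZModModule.add_self, add_zero]
    exact single_mem_edgeGenerators
  rw [h, hfk, ← add_assoc, add_assoc, ZModModule.add_self, add_zero] at hmem
  exact adj_of_single_add_single_mem hmem

lemma not_swap_of_isLeaf (hT : T.CliqueFree 3) (hf0 : f 0 = 0) (hij : T.Adj i j)
    (hi : ∀ l, T.Adj i l → l = j) (hjk : T.Adj j k) (hik : i ≠ k) (hfi : f (δ i) = δ j) :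
    f (δ j) ≠ δ i := by
  intro hfj
  have hmem : f (δ k) ∈ edgeGenerators T :=
    (apply_mem_edgeGenerators_iff hf0).2 single_mem_edgeGenerators
  have hmem' : f (δ k) + δ i ∈ edgeGenerators T := by
    rw [← hfj, apply_add_apply_mem_iff]
    exact (single_add_single_mem_edgeGenerators_iff hjk.ne').2 hjk.symm
  obtain ⟨l, hil, h⟩ := exists_of_add_single_mem hmem hmem'
  obtain rfl := hi l hil
  obtain h | h := h
  · exact hik.symm (single_one_injective (f.injective (h.trans hfi.symm)))
  · have hfij := apply_single_add_single_eq hT hf0 hij.symm hij hfj hfi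
    exact single_ne_single_add_single hij.ne' (f.injective (h.trans hfij.symm))

lemma apply_eq_self_of_forall_single (hT : T.CliqueFree 3) (hf0 : f 0 = 0)
    (hf : ∀ i, f (δ i) = δ i) : ∀ x ∈ edgeGenerators T, f x = x := by
  rintro x (⟨i, rfl⟩ | ⟨i, j, hij, rfl⟩)
  exacts [hf i, apply_single_add_single_eq hT hf0 hij hij (hf i) (hf j)]

lemma closure_edgeGenerators [Finite ι] : AddSubmonoid.closure (edgeGenerators T) = ⊤ := by
  cases nonempty_fintype ι
  refine eq_top_iff.2 fun x _ ↦ ?_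
  rw [← Finset.univ_sum_single x]
  refine sum_mem fun i _ ↦ ?_
  obtain h | h := (by decide : ∀ a : ZMod 2, a = 0 ∨ a = 1) (x i)
  · simp [h]
  · exact h ▸ AddSubmonoid.subset_closure single_mem_edgeGenerators

/-- If `u` is a vertex `δ i`, then `u + δ i = 0`; if it is an edge, removing an end leaves the
other one. -/
lemma exists_adj_apply_add_single_eq_self (hT : ∀ i, ∃ j, T.Adj i j) (hf0 : f 0 = 0)
    (hf : ∀ x ∈ edgeGenerators T, f x = x) {u : ι → ZMod 2} (hu : u ∈ edgeGenerators T) :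
    ∃ i j, T.Adj i j ∧ f (u + δ i) = u + δ i ∧ f (u + δ j) = u + δ j := by
  obtain ⟨i, rfl⟩ | ⟨i, j, hij, rfl⟩ := hu
  · obtain ⟨j, hij⟩ := hT i
    refine ⟨i, j, hij, by rw [ZModModule.add_self, hf0], hf _ ?_⟩
    exact (single_add_single_mem_edgeGenerators_iff hij.ne).2 hij
  · refine ⟨i, j, hij, hf _ ?_, hf _ ?_⟩
    · rw [add_right_comm, ZModModule.add_self, zero_add]
      exact single_mem_edgeGenerators
    · rw [add_assoc, ZModModule.add_self, add_zero]
      exact single_mem_edgeGenerators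

end EdgeCube

section Path

variable {n m : ℕ}

lemma pathGraph_adj_zero_one : (pathGraph (n + 2)).Adj 0 1 := by
  simp [pathGraph_adj]

lemma eq_one_of_pathGraph_adj_zero {l : Fin (n + 2)} (hl : (pathGraph (n + 2)).Adj 0 l) :
    l = 1 := by
  obtain h | h := pathGraph_adj.1 hl
  · exact Fin.ext (by simpa using h.symm)
  · exact absurd h (Nat.succ_ne_zero _)

lemma eq_or_eq_of_pathGraph_adj {i j k l : Fin n} (hij : (pathGraph n).Adj i j)
    (hjk : (pathGraph n).Adj j k) (hik : i ≠ k) (hjl : (pathGraph n).Adj j l) :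
    l = i ∨ l = k := by
  simp only [pathGraph_adj] at hij hjk hjl
  omega

lemma exists_two_pathGraph_adj {k : Fin (n + 1)} (h0 : k ≠ 0) (hlast : k ≠ Fin.last n) :
    ∃ a b, (pathGraph (n + 1)).Adj k a ∧ (pathGraph (n + 1)).Adj k b ∧ a ≠ b := by
  have h0' : 0 < k.val := Fin.pos_iff_ne_zero.2 h0
  have hlast' : k.val < n := Fin.lt_last_iff_ne_last.2 hlast
  refine ⟨⟨k - 1, by omega⟩, ⟨k + 1, by omega⟩, ?_⟩
  simp only [pathGraph_adj, ne_eq, Fin.mk.injEq, true_or, true_and]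
  omega

lemma apply_single_eq_self_of_ne_zero_of_ne_last
    {f : edgeCube (pathGraph (n + 1)) ≃g edgeCube (pathGraph (n + 1))} {i j k : Fin (n + 1)}
    (hf0 : f 0 = 0) (hij : (pathGraph (n + 1)).Adj i j) (hfi : f (δ i) = δ i)
    (hfj : f (δ j) = δ j) (hk0 : k ≠ 0) (hklast : k ≠ Fin.last n) : f (δ k) = δ k := by
  obtain ⟨a, b, ha, hb, hab⟩ := exists_two_pathGraph_adj hk0 hklast
  refine propagates_from_edge_of_preconnected (P := fun k ↦ f (δ k) = δ k)
    (pathGraph_preconnected _) (fun i j k l hij hjk hkl hik hlj hfi hfj ↦ ?_) hij hfi hfj ha hb hab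
  exact apply_single_eq_self cliqueFree_hasse_three hf0 hij hjk hkl hik hlj
    (fun _ ↦ eq_or_eq_of_pathGraph_adj hij hjk hik) hfi hfj

lemma apply_eq_self_of_adj_of_ends
    {f : edgeCube (pathGraph (n + 1)) ≃g edgeCube (pathGraph (n + 1))} {i j : Fin (n + 1)}
    (hf0 : f 0 = 0) (hij : (pathGraph (n + 1)).Adj i j) (hfi : f (δ i) = δ i)
    (hfj : f (δ j) = δ j) (hfirst : f (δ 0) = δ 0)
    (hlast : f (δ (Fin.last n)) = δ (Fin.last n)) :
    ∀ x ∈ edgeGenerators (pathGraph (n + 1)), f x = x := by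
  refine apply_eq_self_of_forall_single cliqueFree_hasse_three hf0 fun k ↦ ?_
  obtain rfl | hk0 := eq_or_ne k 0
  · exact hfirst
  obtain rfl | hklast := eq_or_ne k (Fin.last n)
  · exact hlast
  exact apply_single_eq_self_of_ne_zero_of_ne_last hf0 hij hfi hfj hk0 hklast

lemma apply_single_zero_add_single_last
    {f : edgeCube (pathGraph (m + 4)) ≃g edgeCube (pathGraph (m + 4))} (hf0 : f 0 = 0)
    (hf : ∀ x ∈ edgeGenerators (pathGraph (m + 4)), f x = x) :
    f (δ 0 + δ (Fin.last (m + 3))) = δ 0 + δ (Fin.last (m + 3)) := by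
  let i : Fin (m + 4) := ⟨m + 1, by omega⟩
  let j : Fin (m + 4) := ⟨m + 2, by omega⟩
  have hfirst : f (δ 0) = δ 0 := hf _ single_mem_edgeGenerators
  have h01 : (pathGraph (m + 4)).Adj 0 1 := pathGraph_adj_zero_one
  have interior {k : Fin (m + 4)} (hk0 : k ≠ 0) (hklast : k ≠ Fin.last (m + 3)) :
      f (δ 0 + δ k) = δ 0 + δ k := by
    rw [← differential_apply_eq_iff hfirst]
    refine apply_single_eq_self_of_ne_zero_of_ne_last differential_zero h01 ?_ ?_ hk0 hklast
    all_goals rw [differential_apply_eq_iff hfirst]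
    · rw [ZModModule.add_self, hf0]
    · exact hf _ ((single_add_single_mem_edgeGenerators_iff h01.ne).2 h01)
  have hij : (pathGraph (m + 4)).Adj i j := by simp [i, j, pathGraph_adj]
  have hjlast : (pathGraph (m + 4)).Adj j (Fin.last (m + 3)) := by simp [j, pathGraph_adj]
  have hilast : i ≠ Fin.last (m + 3) := by simp [i, Fin.ext_iff]
  refine apply_single_add_single_eq_self cliqueFree_hasse_three hij hjlast hilast
    (fun _ ↦ eq_or_eq_of_pathGraph_adj hij hjlast hilast) (by simp [j, pathGraph_adj]) hfirst
    (hf _ single_mem_edgeGenerators) (interior ?_ hilast) (interior ?_ ?_)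
  all_goals simp [i, j, Fin.ext_iff]

lemma apply_add_eq_self_of_mem_edgeGenerators
    {f : edgeCube (pathGraph (m + 4)) ≃g edgeCube (pathGraph (m + 4))} (hf0 : f 0 = 0)
    (hf : ∀ x ∈ edgeGenerators (pathGraph (m + 4)), f x = x) :
    ∀ u ∈ edgeGenerators (pathGraph (m + 4)), ∀ x ∈ edgeGenerators (pathGraph (m + 4)),
      f (u + x) = u + x := by
  have of_ends {u} (hu : u ∈ edgeGenerators (pathGraph (m + 4))) (hfirst : f (u + δ 0) = u + δ 0)
      (hlast : f (u + δ (Fin.last (m + 3))) = u + δ (Fin.last (m + 3))) :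
      ∀ x ∈ edgeGenerators (pathGraph (m + 4)), f (u + x) = u + x := by
    obtain ⟨i, j, hij, hfi, hfj⟩ := exists_adj_apply_add_single_eq_self
      (pathGraph_preconnected (m + 4)).exists_adj_of_nontrivial hf0 hf hu
    simp only [← differential_apply_eq_iff (hf u hu)] at hfi hfj hfirst hlast ⊢
    exact apply_eq_self_of_adj_of_ends differential_zero hij hfi hfj hfirst hlast
  have hend := apply_single_zero_add_single_last hf0 hf
  have hfirst := of_ends (u := δ 0) single_mem_edgeGenerators
    (by rw [ZModModule.add_self, hf0]) hend
  have hlast := of_ends (u := δ (Fin.last (m + 3))) single_mem_edgeGenerators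
    (by rwa [add_comm _ (δ 0)]) (by rw [ZModModule.add_self, hf0])
  intro u hu
  exact of_ends hu (by rw [add_comm u, hfirst u hu]) (by rw [add_comm u, hlast u hu])

/-- The set `{0, δ 0, δ 1, δ last}` induces a paw with centre `0` and pendant vertex `δ last`. -/
lemma exists_isDistinguishing_edgeCube_pathGraph (m : ℕ) :
    ∃ c : (Fin (m + 4) → ZMod 2) → Fin 2, IsDistinguishing (edgeCube (pathGraph (m + 4))) c := by
  refine exists_isDistinguishing_of_set {0, δ 0, δ 1, δ (Fin.last (m + 3))} fun f hf ↦ ?_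
  have h01 : (pathGraph (m + 4)).Adj 0 1 := pathGraph_adj_zero_one
  have h12 : (pathGraph (m + 4)).Adj 1 ⟨2, by omega⟩ := by simp [pathGraph_adj]
  have h02 : (0 : Fin (m + 4)) ≠ ⟨2, by omega⟩ := by simp [Fin.ext_iff]
  have adj_zero (i : Fin (m + 4)) : (edgeCube (pathGraph (m + 4))).Adj 0 (δ i) := by
    simpa only [edgeCube_adj, zero_add] using single_mem_edgeGenerators
  have adj_iff {i j : Fin (m + 4)} (hij : i ≠ j) :
      (edgeCube (pathGraph (m + 4))).Adj (δ i) (δ j) ↔ (pathGraph (m + 4)).Adj i j := by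
    rw [edgeCube_adj, single_add_single_mem_edgeGenerators_iff hij]
  obtain ⟨hf0, hlast, h⟩ := apply_paw f hf (adj_zero 0) (adj_zero 1) (adj_zero _)
    ((adj_iff h01.ne).2 h01)
    (by rw [adj_iff] <;> simp [pathGraph_adj, Fin.ext_iff])
    (by rw [adj_iff] <;> simp [pathGraph_adj, Fin.ext_iff])
  obtain ⟨hfirst, hone⟩ : f (δ 0) = δ 0 ∧ f (δ 1) = δ 1 := by
    refine h.resolve_right fun ⟨hfirst, hone⟩ ↦ ?_
    exact not_swap_of_isLeaf cliqueFree_hasse_three hf0 h01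
      (fun _ ↦ eq_one_of_pathGraph_adj_zero) h12 h02 hfirst hone
  exact apply_eq_self_of_closure_eq_top closure_edgeGenerators
    (fun g hg0 hg ↦ apply_add_eq_self_of_mem_edgeGenerators hg0 hg) hf0
    (apply_eq_self_of_adj_of_ends hf0 h01 hfirst hone hfirst hlast)

end Path

section AugmentedCube

variable {n : ℕ}

/-- The prefix sums of `x`. It sends the vector `δ l` to the indicator of the suffix starting at
`l`, and the edge vectors of the path to unit vectors. -/
def prefixSum (n : ℕ) : (Fin n → ZMod 2) →+ (Fin n → ZMod 2) where
  toFun x k := ∑ i ∈ Finset.Iic k, x i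
  map_zero' := by ext; simp
  map_add' x y := by ext; simp [Finset.sum_add_distrib]

lemma prefixSum_apply (x : Fin n → ZMod 2) (k : Fin n) :
    prefixSum n x k = ∑ i ∈ Finset.Iic k, x i := rfl

lemma prefixSum_single_apply (l k : Fin n) : prefixSum n (δ l) k = if l ≤ k then 1 else 0 := by
  simp [prefixSum_apply, Pi.single_apply]

lemma prefixSum_injective : Function.Injective (prefixSum n) := by
  refine (injective_iff_map_eq_zero _).2 fun x hx ↦ funext fun k ↦ ?_
  induction k using WellFoundedLT.induction with
  | ind k ih =>
    have hk := congrFun hx k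
    rwa [prefixSum_apply, Finset.sum_eq_single_of_mem k (Finset.mem_Iic.2 le_rfl)] at hk
    exact fun i hi hik ↦ ih i (lt_of_le_of_ne (Finset.mem_Iic.1 hi) hik)

lemma prefixSum_single_add_single {i j : Fin n} (hij : i.val + 1 = j) :
    prefixSum n (δ i + δ j) = δ i := by
  ext k
  rw [map_add, Pi.add_apply, prefixSum_single_apply, prefixSum_single_apply, Pi.single_apply]
  grind

lemma mem_edgeGenerators_pathGraph_iff {x : Fin n → ZMod 2} :
    x ∈ edgeGenerators (pathGraph n) ↔
      ∃ l, prefixSum n x = δ l ∨ prefixSum n x = prefixSum n (δ l) := by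
  constructor
  · rintro (⟨l, rfl⟩ | ⟨i, j, hij, rfl⟩)
    · exact ⟨l, Or.inr rfl⟩
    · obtain hij | hji := pathGraph_adj.1 hij
      · exact ⟨i, Or.inl (prefixSum_single_add_single hij)⟩
      · exact ⟨j, Or.inl (add_comm (δ i) (δ j) ▸ prefixSum_single_add_single hji)⟩
  · rintro ⟨l, h | h⟩
    · by_cases hl : l.val + 1 < n
      · rw [← prefixSum_single_add_single (j := ⟨l + 1, hl⟩) rfl] at h
        exact Or.inr ⟨l, _, pathGraph_adj.2 (Or.inl rfl), prefixSum_injective h⟩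
      · refine Or.inl ⟨l, prefixSum_injective (h.trans ?_)⟩
        ext k
        rw [prefixSum_single_apply, Pi.single_apply]
        grind
    · exact Or.inl ⟨l, prefixSum_injective h⟩

lemma AQ_adj_comp_iff (e : ZMod 2 ≃ Bool) {x y : Fin n → ZMod 2} :
    (AQ n).Adj (e ∘ x) (e ∘ y) ↔ ∃ l, x + y = δ l ∨ x + y = prefixSum n (δ l) := by
  have h0 (i) : e (x i) = e (y i) ↔ x i + y i = 0 := by
    rw [e.apply_eq_iff_eq, CharTwo.add_eq_zero]
  have h1 (i) : e (x i) ≠ e (y i) ↔ x i + y i = 1 := by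
    rw [Ne, h0]
    generalize x i + y i = a
    revert a
    decide
  simp only [AQ, Function.comp_apply, h0, h1, exists_or, funext_iff, Pi.add_apply,
    Pi.single_apply, prefixSum_single_apply]
  exact or_congr (exists_congr fun l ↦ by grind) (exists_congr fun l ↦ by grind)

/-- Prefix sums identify the Cayley graph generated by the vertices and edges of a path with the
augmented cube. -/
noncomputable def edgeCubePathGraphIso (n : ℕ) : edgeCube (pathGraph n) ≃g AQ n where
  toEquiv := (Equiv.ofBijective _ (Finite.injective_iff_bijective.1 prefixSum_injective)).trans
    (Equiv.arrowCongr (Equiv.refl _) finTwoEquiv)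
  map_rel_iff' {x y} := by
    rw [edgeCube_adj, mem_edgeGenerators_pathGraph_iff, map_add]
    exact AQ_adj_comp_iff finTwoEquiv

lemma isAuto_AQ_compl : IsAuto (AQ n) compl_involutive.toPerm := by
  intro a b
  simp [AQ]

end AugmentedCube

theorem stmt_16 (n : ℕ) (hn : 4 ≤ n) : distNum (AQ n) = 2 := by
  obtain ⟨m, rfl⟩ := Nat.exists_eq_add_of_le' hn
  obtain ⟨c, hc⟩ := exists_isDistinguishing_edgeCube_pathGraph m
  have hc' := hc.comp_iso (edgeCubePathGraphIso (m + 4)).symm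
  refine hc'.distNum_eq_two isAuto_AQ_compl fun h ↦ ?_
  simpa using congrFun (congrArg (· ⊥) h) 0
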